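/- Let X be a d-dimensional random vector whose law has a probability density belonging to either 𝒫(d) or 𝒫⁺(d). Then there exists a constant C > 0, depending only on the law of X and on d, such that for every ε ∈ (−1/2, 1/2), if X' = X/(1 + ε), then the Hellinger affinity satisfies ρ(L_X, L_{X'}) ≥ 1 − C·ε². -/

import Mathlib

open MeasureTheory Filter

/-- Hellinger affinity `ρ(μ, ν) = ∫ sqrt(f g) dλ`, computed with the dominating measure
`λ = μ + ν` and the Radon–Nikodym densities `f = dμ/dλ`, `g = dν/dλ`. -/
noncomputable def hellingerAffinity {Ω : Type*} [MeasurableSpace Ω] (μ ν : Measure Ω) : ℝ :=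
  ∫ x, Real.sqrt ((μ.rnDeriv (μ + ν) x).toReal * (ν.rnDeriv (μ + ν) x).toReal) ∂(μ + ν)

open MeasureTheory Filter

/-- `ℝ^d` with the Euclidean norm. -/
abbrev ESp (d : ℕ) := EuclideanSpace ℝ (Fin d)

/-- The open positive orthant `(0,∞)^d`. -/
def orthantOpen (d : ℕ) : Set (ESp d) := {x | ∀ i, 0 < x i}

/-- The closed orthant `[0,∞)^d`. -/
def orthantClosed (d : ℕ) : Set (ESp d) := {x | ∀ i, 0 ≤ x i}

/-- `e^{−V}` is a density in the class `𝒫(d)`: `V` is `C^∞`, `V` and all its derivatives have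
at most polynomial growth at infinity, and `e^V` increases faster than any polynomial
at infinity. -/
structure IsInP (d : ℕ) (V : ESp d → ℝ) : Prop where
  smooth : ContDiff ℝ (⊤ : ℕ∞) V
  polyGrowth : ∀ k : ℕ, ∃ C : ℝ, ∃ p : ℕ, ∀ x, ‖iteratedFDeriv ℝ k V x‖ ≤ C * (1 + ‖x‖) ^ p
  superPoly : ∀ p : ℕ,
    Tendsto (fun x : ESp d => Real.exp (V x) / (1 + ‖x‖) ^ p) (cocompact _) atTop
  isDensity : ∫ x, Real.exp (-V x) = 1

/-- `e^{−V}` is a density in the class `𝒫⁺(d)` on `[0,∞)^d`: `V` is `C^∞` in `(0,∞)^d`,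
`V` and all its derivatives have at most polynomial growth at infinity and extend continuously
to the boundary of `[0,∞)^d`, and `e^V` increases faster than any polynomial at infinity. -/
structure IsInPplus (d : ℕ) (V : ESp d → ℝ) : Prop where
  smooth : ContDiffOn ℝ (⊤ : ℕ∞) V (orthantOpen d)
  derivsExtendPolyGrowth : ∀ k : ℕ,
    ∃ g : ESp d → ContinuousMultilinearMap ℝ (fun _ : Fin k => ESp d) ℝ,
      ContinuousOn g (orthantClosed d) ∧
      (∀ x ∈ orthantOpen d, g x = iteratedFDerivWithin ℝ k V (orthantOpen d) x) ∧
      ∃ C : ℝ, ∃ p : ℕ, ∀ x ∈ orthantClosed d, ‖g x‖ ≤ C * (1 + ‖x‖) ^ p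
  superPoly : ∀ p : ℕ,
    Tendsto (fun x : ESp d => Real.exp (V x) / (1 + ‖x‖) ^ p)
      (cocompact _ ⊓ 𝓟 (orthantClosed d)) atTop
  isDensity : ∫ x in orthantClosed d, Real.exp (-V x) = 1

/-- `μ` is a measure on `ℝ^d` with a probability density belonging to `𝒫(d)`. -/
def HasDensityInP (d : ℕ) (μ : Measure (ESp d)) : Prop :=
  ∃ V, IsInP d V ∧ μ = volume.withDensity fun x => ENNReal.ofReal (Real.exp (-V x))

/-- `μ` is a measure on `[0,∞)^d ⊆ ℝ^d` with a probability density belonging to `𝒫⁺(d)`. -/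
def HasDensityInPplus (d : ℕ) (μ : Measure (ESp d)) : Prop :=
  ∃ V, IsInPplus d V ∧
    μ = (volume.restrict (orthantClosed d)).withDensity fun x => ENNReal.ofReal (Real.exp (-V x))

section Dilation

variable {E : Type*} [NormedAddCommGroup E] [NormedSpace ℝ E]

/-- If `φ' = φ₁`, `φ₁' = φ₂` and `|φ₂| ≤ M` on `[-1, 1]`, then the symmetric second difference
of `φ` at `0` is at most `2 M s²`. -/
lemma add_neg_le_of_second_deriv_le {φ φ₁ φ₂ : ℝ → ℝ} {M : ℝ}
    (h₁ : ∀ t, HasDerivAt φ (φ₁ t) t) (h₂ : ∀ t, HasDerivAt φ₁ (φ₂ t) t)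
    (hM : ∀ t, |t| ≤ 1 → |φ₂ t| ≤ M) {s : ℝ} (hs : |s| ≤ 1) :
    φ s + φ (-s) ≤ 2 * φ 0 + 2 * M * s ^ 2 := by
  have hd : ∀ t, HasDerivAt (fun t => φ t + φ (-t)) (φ₁ t - φ₁ (-t)) t := fun t => by
    have := (h₁ t).add ((h₁ (-t)).comp t (hasDerivAt_neg t))
    simpa [sub_eq_add_neg] using! this
  have hb : ∀ t ∈ Set.Icc (-|s|) |s|, ‖φ₁ t - φ₁ (-t)‖ ≤ 2 * M * |s| := fun t ht => by
    have habs : |t| ≤ |s| := abs_le.2 ht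
    have hI : ∀ u ∈ Set.Icc (-1 : ℝ) 1, HasDerivWithinAt φ₁ (φ₂ u) (Set.Icc (-1 : ℝ) 1) u :=
      fun u _ => (h₂ u).hasDerivWithinAt
    have ht1 : t ∈ Set.Icc (-1 : ℝ) 1 := abs_le.1 (habs.trans hs)
    have hmv := (convex_Icc (-1 : ℝ) 1).norm_image_sub_le_of_norm_hasDerivWithin_le hI
      (fun u hu => hM u (abs_le.2 hu)) (x := -t) (y := t)
      ⟨by linarith [ht1.2], by linarith [ht1.1]⟩ ht1
    have hM0 : 0 ≤ M := (abs_nonneg _).trans (hM 0 (by simp))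
    calc ‖φ₁ t - φ₁ (-t)‖ ≤ M * ‖t - -t‖ := hmv
      _ = 2 * M * |t| := by
        rw [sub_neg_eq_add, ← two_mul, Real.norm_eq_abs, abs_mul, abs_two]; ring
      _ ≤ _ := by gcongr
  have := (convex_Icc (-|s|) |s|).norm_image_sub_le_of_norm_hasDerivWithin_le
    (fun u _ => (hd u).hasDerivWithinAt) hb (x := 0) (y := s)
    ⟨by simp, by simp⟩ ⟨neg_abs_le s, le_abs_self s⟩
  have h := (le_abs_self _).trans this
  simp only [neg_zero, sub_zero, Real.norm_eq_abs] at h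
  rw [mul_assoc (2 * M), abs_mul_abs_self] at h
  nlinarith

lemma abs_second_dilation_deriv_le {V : E → ℝ} {C₁ C₂ t : ℝ} {p₁ p₂ : ℕ} {x y : E}
    (hx : Real.exp t • y = x) (ht : t ≤ 1)
    (hC₁ : ‖iteratedFDeriv ℝ 1 V x‖ ≤ C₁ * (1 + ‖x‖) ^ p₁)
    (hC₂ : ‖iteratedFDeriv ℝ 2 V x‖ ≤ C₂ * (1 + ‖x‖) ^ p₂) :
    |fderiv ℝ (fderiv ℝ V) x x x + fderiv ℝ V x x|
      ≤ (|C₁| + |C₂|) * 3 ^ (p₁ + p₂ + 2) * (1 + ‖y‖) ^ (p₁ + p₂ + 2) := by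
  have hxy : 1 + ‖x‖ ≤ 3 * (1 + ‖y‖) := by
    have he : Real.exp t ≤ 3 := (Real.exp_le_exp.2 ht).trans
      (Real.exp_one_lt_d9.le.trans (by norm_num))
    rw [← hx, norm_smul, Real.norm_of_nonneg (Real.exp_pos t).le]
    nlinarith [norm_nonneg y]
  have hD₁ : ‖fderiv ℝ V x‖ ≤ |C₁| * (1 + ‖x‖) ^ p₁ := by
    rw [← norm_iteratedFDeriv_one]
    exact (hC₁).trans (by gcongr; exact le_abs_self _)
  have hD₂ : ‖fderiv ℝ (fderiv ℝ V) x‖ ≤ |C₂| * (1 + ‖x‖) ^ p₂ := by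
    rw [← norm_iteratedFDeriv_one, norm_iteratedFDeriv_fderiv]
    exact (hC₂).trans (by gcongr; exact le_abs_self _)
  have h1 : (1 : ℝ) ≤ 1 + ‖x‖ := by simp
  have hx1 : ‖x‖ ≤ 1 + ‖x‖ := by simp
  calc |fderiv ℝ (fderiv ℝ V) x x x + fderiv ℝ V x x|
      ≤ ‖fderiv ℝ (fderiv ℝ V) x x x‖ + ‖fderiv ℝ V x x‖ := abs_add_le _ _
    _ ≤ ‖fderiv ℝ (fderiv ℝ V) x‖ * ‖x‖ * ‖x‖ + ‖fderiv ℝ V x‖ * ‖x‖ :=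
      add_le_add (ContinuousLinearMap.le_opNorm₂ _ _ _) (ContinuousLinearMap.le_opNorm _ _)
    _ ≤ (|C₂| * (1 + ‖x‖) ^ p₂) * (1 + ‖x‖) * (1 + ‖x‖)
        + (|C₁| * (1 + ‖x‖) ^ p₁) * (1 + ‖x‖) := by gcongr
    _ = |C₂| * (1 + ‖x‖) ^ (p₂ + 2) + |C₁| * (1 + ‖x‖) ^ (p₁ + 1) := by ring
    _ ≤ |C₂| * (1 + ‖x‖) ^ (p₁ + p₂ + 2) + |C₁| * (1 + ‖x‖) ^ (p₁ + p₂ + 2) := by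
      gcongr <;> first | exact h1 | omega
    _ = (|C₁| + |C₂|) * (1 + ‖x‖) ^ (p₁ + p₂ + 2) := by ring
    _ ≤ (|C₁| + |C₂|) * (3 * (1 + ‖y‖)) ^ (p₁ + p₂ + 2) := by gcongr
    _ = _ := by rw [mul_pow]; ring

/-- Along the dilations `t ↦ eᵗ y` in an open cone, a `C²` function with polynomially bounded
first and second derivatives has polynomially bounded symmetric second differences. -/
lemma exists_dilation_second_difference_le {S : Set E} (hS : IsOpen S)
    (hcone : ∀ c : ℝ, 0 < c → ∀ x ∈ S, c • x ∈ S) {V : E → ℝ} (hV : ContDiffOn ℝ 2 V S)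
    {C₁ C₂ : ℝ} {p₁ p₂ : ℕ}
    (hC₁ : ∀ x ∈ S, ‖iteratedFDeriv ℝ 1 V x‖ ≤ C₁ * (1 + ‖x‖) ^ p₁)
    (hC₂ : ∀ x ∈ S, ‖iteratedFDeriv ℝ 2 V x‖ ≤ C₂ * (1 + ‖x‖) ^ p₂) :
    ∃ K : ℝ, ∃ q : ℕ, 0 ≤ K ∧ ∀ y ∈ S, ∀ s : ℝ, |s| ≤ 1 →
      V (Real.exp s • y) + V (Real.exp (-s) • y) ≤ 2 * V y + 2 * (K * (1 + ‖y‖) ^ q) * s ^ 2 := by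
  refine ⟨(|C₁| + |C₂|) * 3 ^ (p₁ + p₂ + 2), p₁ + p₂ + 2, by positivity, fun y hy s hs => ?_⟩
  have hmem : ∀ t : ℝ, Real.exp t • y ∈ S := fun t => hcone _ (Real.exp_pos t) y hy
  have hV' : ContDiffOn ℝ 1 (fderiv ℝ V) S := hV.fderiv_of_isOpen hS (by norm_num)
  have hγ : ∀ t : ℝ, HasDerivAt (fun t => Real.exp t • y) (Real.exp t • y) t := fun t =>
    (Real.hasDerivAt_exp t).smul_const y
  have hφ : ∀ t : ℝ, HasDerivAt (fun t => V (Real.exp t • y))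
      (fderiv ℝ V (Real.exp t • y) (Real.exp t • y)) t := fun t =>
    (((hV.differentiableOn (by norm_num)).differentiableAt
      (hS.mem_nhds (hmem t))).hasFDerivAt.comp_hasDerivAt t (hγ t))
  have hγ' : ∀ t : ℝ, HasDerivAt (fun t => fderiv ℝ V (Real.exp t • y))
      (fderiv ℝ (fderiv ℝ V) (Real.exp t • y) (Real.exp t • y)) t := fun t =>
    ((hV'.differentiableOn one_ne_zero).differentiableAt
      (hS.mem_nhds (hmem t))).hasFDerivAt.comp_hasDerivAt t (hγ t)
  have hφ' : ∀ t : ℝ, HasDerivAt (fun t => fderiv ℝ V (Real.exp t • y) (Real.exp t • y))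
      (fderiv ℝ (fderiv ℝ V) (Real.exp t • y) (Real.exp t • y) (Real.exp t • y)
        + fderiv ℝ V (Real.exp t • y) (Real.exp t • y)) t := fun t =>
    (hγ' t).clm_apply (hγ t)
  have h := add_neg_le_of_second_deriv_le hφ hφ' (fun t ht => abs_second_dilation_deriv_le rfl
    (abs_le.1 ht).2 (hC₁ _ (hmem t)) (hC₂ _ (hmem t))) hs
  rwa [Real.exp_zero, one_smul] at h

end Dilation

lemma hellingerAffinity_withDensity {Ω : Type*} [MeasurableSpace Ω] {κ : Measure Ω}
    [SigmaFinite κ] {f g : Ω → ℝ} (hf : AEMeasurable f κ) (hg : AEMeasurable g κ)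
    (hf0 : ∀ x, 0 ≤ f x) (hg0 : ∀ x, 0 ≤ g x) :
    hellingerAffinity (κ.withDensity fun x => ENNReal.ofReal (f x))
      (κ.withDensity fun x => ENNReal.ofReal (g x)) = ∫ x, Real.sqrt (f x * g x) ∂κ := by
  have hsum : (κ.withDensity fun x => ENNReal.ofReal (f x))
      + (κ.withDensity fun x => ENNReal.ofReal (g x))
      = κ.withDensity fun x => ENNReal.ofReal (f x + g x) := by
    ext A hA
    simp_rw [Measure.add_apply, withDensity_apply _ hA, ENNReal.ofReal_add (hf0 _) (hg0 _)]
    rw [lintegral_add_left' hf.ennreal_ofReal.restrict]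
  have hfac : ∀ h : Ω → ℝ, AEMeasurable h κ → (∀ x, 0 ≤ h x) →
      (κ.withDensity fun x => ENNReal.ofReal (h x)) ≪
        (κ.withDensity fun x => ENNReal.ofReal (f x + g x)) →
      ∀ᵐ x ∂κ, (f x + g x) * ((κ.withDensity fun x => ENNReal.ofReal (h x)).rnDeriv
        (κ.withDensity fun x => ENNReal.ofReal (f x + g x)) x).toReal = h x := by
    intro h hh hh0 hac
    filter_upwards [Measure.rnDeriv_mul_rnDeriv (κ := κ) hac,
      Measure.rnDeriv_withDensity₀ κ hh.ennreal_ofReal,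
      Measure.rnDeriv_withDensity₀ κ (hf.add hg).ennreal_ofReal] with x h1 h2 h3
    have h3' : (κ.withDensity fun x => ENNReal.ofReal (f x + g x)).rnDeriv κ x
      = ENNReal.ofReal (f x + g x) := h3
    rw [Pi.mul_apply, h2, h3'] at h1
    have := congrArg ENNReal.toReal h1
    rw [ENNReal.toReal_mul, ENNReal.toReal_ofReal (hh0 x),
      ENNReal.toReal_ofReal (add_nonneg (hf0 x) (hg0 x))] at this
    rw [mul_comm, this]
  unfold hellingerAffinity
  have hfg : AEMeasurable (fun x => f x + g x) κ := hf.add hg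
  rw [hsum, integral_withDensity_eq_integral_toReal_smul₀ hfg.ennreal_ofReal
    (ae_of_all _ fun x => ENNReal.ofReal_lt_top)]
  refine integral_congr_ae ?_
  filter_upwards [hfac f hf hf0 (hsum ▸ Measure.AbsolutelyContinuous.rfl.add_right _),
    hfac g hg hg0 (hsum ▸ add_comm (κ.withDensity fun x => ENNReal.ofReal (f x)) _ ▸
      Measure.AbsolutelyContinuous.rfl.add_right _)] with x hx1 hx2
  have h0 := add_nonneg (hf0 x) (hg0 x)
  rw [ENNReal.toReal_ofReal h0, smul_eq_mul, ← Real.sqrt_mul_self h0,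
    ← Real.sqrt_mul (mul_nonneg h0 h0), mul_mul_mul_comm, hx1, hx2]

section Cone

variable {d : ℕ} {S : Set (ESp d)} {V : ESp d → ℝ}

lemma exists_one_add_norm_pow_mul_exp_neg_le {C : ℝ} {p : ℕ}
    (hC : ∀ x ∈ S, |V x| ≤ C * (1 + ‖x‖) ^ p)
    (hsuper : ∀ q : ℕ, Tendsto (fun x : ESp d => Real.exp (V x) / (1 + ‖x‖) ^ q)
      (cocompact _ ⊓ 𝓟 S) atTop) (q : ℕ) :
    ∃ K : ℝ, ∀ x ∈ S, (1 + ‖x‖) ^ q * Real.exp (-V x) ≤ K := by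
  have hev := (hsuper q).eventually_ge_atTop 1
  rw [eventually_inf_principal] at hev
  obtain ⟨T, hT, hTS⟩ := mem_cocompact.1 hev
  obtain ⟨R, hR⟩ := hT.isBounded.exists_norm_le
  refine ⟨max 1 ((1 + |R|) ^ q * Real.exp (|C| * (1 + |R|) ^ p)), fun x hx => ?_⟩
  by_cases hxT : x ∈ T
  · refine le_max_of_le_right ?_
    have hxR : ‖x‖ ≤ |R| := (hR x hxT).trans (le_abs_self R)
    have hVx : -V x ≤ |C| * (1 + |R|) ^ p := calc
      -V x ≤ C * (1 + ‖x‖) ^ p := (neg_le_abs _).trans (hC x hx)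
      _ ≤ |C| * (1 + |R|) ^ p := by gcongr; exact le_abs_self C
    gcongr
  · refine le_max_of_le_left ?_
    have h1 : 1 ≤ Real.exp (V x) / (1 + ‖x‖) ^ q := hTS hxT hx
    rw [le_div_iff₀ (by positivity), one_mul] at h1
    rw [Real.exp_neg, ← div_eq_mul_inv]
    exact (div_le_one (Real.exp_pos _)).2 h1

lemma integrableOn_one_add_norm_pow_mul_exp_neg (hS : MeasurableSet S) (hV : ContinuousOn V S)
    (hdecay : ∀ q : ℕ, ∃ K : ℝ, ∀ x ∈ S, (1 + ‖x‖) ^ q * Real.exp (-V x) ≤ K) (q : ℕ) :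
    IntegrableOn (fun x => (1 + ‖x‖) ^ q * Real.exp (-V x)) S := by
  obtain ⟨K, hK⟩ := hdecay (q + (d + 1))
  have hintegr : Integrable (fun x : ESp d => K * (1 + ‖x‖) ^ (-((d + 1 : ℕ) : ℝ))) :=
    (integrable_one_add_norm (by simp)).const_mul K
  refine hintegr.integrableOn.mono' (ContinuousOn.aestronglyMeasurable (by fun_prop) hS) ?_
  filter_upwards [ae_restrict_mem hS] with x hx
  rw [Real.norm_of_nonneg (by positivity), Real.rpow_neg (by positivity), Real.rpow_natCast,
    ← div_eq_mul_inv, le_div_iff₀ (by positivity)]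
  calc _ = (1 + ‖x‖) ^ (q + (d + 1)) * Real.exp (-V x) := by ring
    _ ≤ K := hK x hx

lemma map_inv_smul_withDensity (hS : MeasurableSet S)
    (hcone : ∀ c : ℝ, 0 < c → ∀ x ∈ S, c • x ∈ S) (f : ESp d → ℝ) {c : ℝ} (hc : 0 < c) :
    ((volume.restrict S).withDensity fun x => ENNReal.ofReal (f x)).map (fun x => c⁻¹ • x)
      = (volume.restrict S).withDensity fun x => ENNReal.ofReal (c ^ d * f (c • x)) := by
  have hmem : ∀ x, c • x ∈ S ↔ x ∈ S := fun x =>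
    ⟨fun h => by simpa [smul_smul, hc.ne'] using hcone c⁻¹ (inv_pos.2 hc) _ h, hcone c hc x⟩
  ext A hA
  have hmA : MeasurableSet ((fun x : ESp d => c⁻¹ • x) ⁻¹' A) :=
    (measurable_const_smul c⁻¹) hA
  rw [Measure.map_apply (measurable_const_smul _) hA, withDensity_apply _ hmA,
    withDensity_apply _ hA, Measure.restrict_restrict hmA, Measure.restrict_restrict hA,
    ← lintegral_indicator (hmA.inter hS), ← lintegral_indicator (hA.inter hS)]
  set F : ESp d → ENNReal := ((fun x : ESp d => c⁻¹ • x) ⁻¹' A ∩ S).indicator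
    fun x => ENNReal.ofReal (f x) with hF
  have hR : (A ∩ S).indicator (fun x => ENNReal.ofReal (c ^ d * f (c • x)))
      = fun x => ENNReal.ofReal (c ^ d) * F (c • x) := by
    ext x
    by_cases hx : x ∈ A ∩ S
    · have : c • x ∈ (fun x : ESp d => c⁻¹ • x) ⁻¹' A ∩ S := by
        simpa [smul_smul, hc.ne', hmem] using hx
      rw [Set.indicator_of_mem hx, hF, Set.indicator_of_mem this,
        ENNReal.ofReal_mul (by positivity)]
    · have : c • x ∉ (fun x : ESp d => c⁻¹ • x) ⁻¹' A ∩ S := by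
        simpa [smul_smul, hc.ne', hmem] using hx
      rw [Set.indicator_of_notMem hx, hF, Set.indicator_of_notMem this, mul_zero]
  have hmap : ∫⁻ x, F (c • x) = ∫⁻ y, F y ∂(Measure.map (fun x => c • x) volume) :=
    (lintegral_map_equiv F (MeasurableEquiv.smul₀ c hc.ne')).symm
  rw [hR, lintegral_const_mul' _ _ ENNReal.ofReal_ne_top, hmap,
    Measure.map_addHaar_smul volume hc.ne', lintegral_smul_measure, finrank_euclideanSpace_fin,
    smul_eq_mul, ← mul_assoc, ← ENNReal.ofReal_mul (by positivity),
    abs_of_pos (by positivity), mul_inv_cancel₀ (by positivity), ENNReal.ofReal_one, one_mul]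

lemma integrableOn_comp_smul (hS : MeasurableSet S)
    (hcone : ∀ c : ℝ, 0 < c → ∀ x ∈ S, c • x ∈ S) {f : ESp d → ℝ} (hf : IntegrableOn f S)
    {c : ℝ} (hc : 0 < c) : IntegrableOn (fun x => f (c • x)) S := by
  rw [← integrable_indicator_iff hS] at hf ⊢
  refine (hf.comp_smul hc.ne').congr (ae_of_all _ fun x => ?_)
  by_cases hx : x ∈ S
  · simp [hx, hcone c hc x hx]
  · have : c • x ∉ S := fun h => hx <| by
      simpa [smul_smul, hc.ne'] using hcone c⁻¹ (inv_pos.2 hc) _ h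
    simp [hx, this]

open scoped Pointwise in
lemma hellingerAffinity_map_inv_smul (hS : MeasurableSet S)
    (hcone : ∀ c : ℝ, 0 < c → ∀ x ∈ S, c • x ∈ S) (hV : ContinuousOn V S) (s : ℝ) :
    hellingerAffinity ((volume.restrict S).withDensity fun x => ENNReal.ofReal (Real.exp (-V x)))
      (((volume.restrict S).withDensity fun x => ENNReal.ofReal (Real.exp (-V x))).map
        fun x => (Real.exp (2 * s))⁻¹ • x)
      = ∫ y in S, Real.exp (-(V (Real.exp s • y) + V (Real.exp (-s) • y)) / 2) := by
  have hsS : Real.exp s • S = S := by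
    ext x
    rw [Set.mem_smul_set_iff_inv_smul_mem₀ (Real.exp_pos s).ne']
    exact ⟨fun h => by simpa [smul_smul] using hcone _ (Real.exp_pos s) _ h,
      hcone _ (inv_pos.2 (Real.exp_pos s)) x⟩
  have hVc : ContinuousOn (fun x => V (Real.exp (2 * s) • x)) S :=
    hV.comp (by fun_prop) fun x hx => hcone _ (Real.exp_pos _) x hx
  have hgc : ContinuousOn
      (fun x => Real.exp (2 * s) ^ d * Real.exp (-V (Real.exp (2 * s) • x))) S :=
    continuousOn_const.mul hVc.neg.rexp
  rw [map_inv_smul_withDensity hS hcone _ (Real.exp_pos _), hellingerAffinity_withDensity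
    (ContinuousOn.aemeasurable (by fun_prop) hS) (hgc.aemeasurable hS)
    (fun x => by positivity) (fun x => by positivity)]
  have hG := Measure.setIntegral_comp_smul_of_pos volume
    (fun y => Real.exp (-(V (Real.exp s • y) + V (Real.exp (-s) • y)) / 2)) S (Real.exp_pos s)
  rw [hsS, finrank_euclideanSpace_fin, smul_eq_mul, eq_inv_mul_iff_mul_eq₀ (by positivity),
    ← integral_const_mul] at hG
  rw [← hG]
  refine integral_congr_ae (ae_of_all _ fun x => ?_)
  simp only [smul_smul, ← Real.exp_add, neg_add_cancel, Real.exp_zero, one_smul]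
  rw [← two_mul, ← Real.exp_nat_mul, ← Real.exp_nat_mul, ← Real.exp_add, ← Real.exp_add,
    ← Real.exp_add, Real.sqrt_eq_iff_mul_self_eq_of_pos (Real.exp_pos _), ← Real.exp_add]
  congr 1
  ring

lemma exists_hellingerAffinity_lower_bound (hS : IsOpen S)
    (hcone : ∀ c : ℝ, 0 < c → ∀ x ∈ S, c • x ∈ S) (hV : ContDiffOn ℝ 2 V S)
    (hgrowth : ∀ k : ℕ, ∃ C : ℝ, ∃ p : ℕ, ∀ x ∈ S,
      ‖iteratedFDeriv ℝ k V x‖ ≤ C * (1 + ‖x‖) ^ p)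
    (hsuper : ∀ q : ℕ, Tendsto (fun x : ESp d => Real.exp (V x) / (1 + ‖x‖) ^ q)
      (cocompact _ ⊓ 𝓟 S) atTop)
    (hone : ∫ x in S, Real.exp (-V x) = 1) :
    ∃ C > (0 : ℝ), ∀ ε ∈ Set.Ioo (-(1/2) : ℝ) (1/2), 1 - C * ε ^ 2 ≤ hellingerAffinity
      ((volume.restrict S).withDensity fun x => ENNReal.ofReal (Real.exp (-V x)))
      (((volume.restrict S).withDensity fun x => ENNReal.ofReal (Real.exp (-V x))).map
        fun x => (1 + ε)⁻¹ • x) := by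
  obtain ⟨C₀, p₀, h₀⟩ := hgrowth 0
  obtain ⟨C₁, p₁, h₁⟩ := hgrowth 1
  obtain ⟨C₂, p₂, h₂⟩ := hgrowth 2
  obtain ⟨K, q, hK, hVK⟩ := exists_dilation_second_difference_le hS hcone hV h₁ h₂
  have hVc : ContinuousOn V S := hV.continuousOn
  have hintegr := integrableOn_one_add_norm_pow_mul_exp_neg hS.measurableSet hVc
    (exists_one_add_norm_pow_mul_exp_neg_le (by simpa using h₀) hsuper)
  have hintV : IntegrableOn (fun x => Real.exp (-V x)) S := by simpa using hintegr 0
  have hJ : 0 ≤ ∫ x in S, (1 + ‖x‖) ^ q * Real.exp (-V x) :=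
    integral_nonneg fun x => by positivity
  set J := ∫ x in S, (1 + ‖x‖) ^ q * Real.exp (-V x) with hJdef
  refine ⟨K * J + 1, by positivity, fun ε hε => ?_⟩
  have hb : 0 < 1 + ε := by linarith [hε.1]
  set s := Real.log (1 + ε) / 2 with hs
  have hexp : Real.exp (2 * s) = 1 + ε := by
    rw [hs, mul_div_cancel₀ _ two_ne_zero, Real.exp_log hb]
  have hsε : |s| ≤ |ε| := by
    have hup := Real.log_le_sub_one_of_pos hb
    have hlo := Real.one_sub_inv_le_log_of_pos hb
    have hinv : 1 - (1 + ε)⁻¹ = ε * (1 + ε)⁻¹ := by field_simp; ring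
    have hinv2 : (1 + ε)⁻¹ ≤ 2 := by
      rw [inv_le_comm₀ hb two_pos]; linarith [hε.1]
    have hinv0 : 0 < (1 + ε)⁻¹ := inv_pos.2 hb
    rcases le_total 0 ε with h | h
    · rw [abs_of_nonneg h, abs_le]
      constructor <;> nlinarith
    · rw [abs_of_nonpos h, abs_le]
      constructor <;> nlinarith
  have hs1 : |s| ≤ 1 := hsε.trans (abs_le.2 ⟨by linarith [hε.1], by linarith [hε.2]⟩)
  have hs2 : s ^ 2 ≤ ε ^ 2 := sq_le_sq.2 hsε
  rw [← hexp, hellingerAffinity_map_inv_smul hS.measurableSet hcone hVc]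
  have hcont : ∀ t : ℝ, ContinuousOn (fun y => V (Real.exp t • y)) S := fun t =>
    hVc.comp (by fun_prop) fun x hx => hcone _ (Real.exp_pos _) x hx
  have hc₁ := hcont s
  have hc₂ := hcont (-s)
  have hG : IntegrableOn
      (fun y => Real.exp (-(V (Real.exp s • y) + V (Real.exp (-s) • y)) / 2)) S := by
    refine ((integrableOn_comp_smul hS.measurableSet hcone hintV (Real.exp_pos s)).add
      (integrableOn_comp_smul hS.measurableSet hcone hintV (Real.exp_pos (-s)))).mono'
      (((hc₁.add hc₂).neg.div_const 2).rexp.aestronglyMeasurable hS.measurableSet)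
      (ae_of_all _ fun y => ?_)
    rw [Real.norm_of_nonneg (Real.exp_pos _).le, Pi.add_apply]
    rcases le_total (V (Real.exp s • y)) (V (Real.exp (-s) • y)) with h | h
    · refine le_add_of_le_of_nonneg (Real.exp_le_exp.2 (by linarith)) (Real.exp_pos _).le
    · refine le_add_of_nonneg_of_le (Real.exp_pos _).le (Real.exp_le_exp.2 (by linarith))
  calc 1 - (K * J + 1) * ε ^ 2 ≤ 1 - K * s ^ 2 * J := by
        nlinarith [mul_le_mul_of_nonneg_left hs2 (mul_nonneg hK hJ), sq_nonneg ε]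
    _ = ∫ y in S, (Real.exp (-V y) - K * s ^ 2 * ((1 + ‖y‖) ^ q * Real.exp (-V y))) := by
      rw [integral_sub hintV ((hintegr q).const_mul _), integral_const_mul, hone]
    _ ≤ _ := by
      refine setIntegral_mono_on (hintV.sub ((hintegr q).const_mul _)) hG hS.measurableSet
        fun y hy => ?_
      have hle := hVK y hy s hs1
      have h1 := Real.add_one_le_exp (-(K * s ^ 2 * (1 + ‖y‖) ^ q))
      calc _ = Real.exp (-V y) * (-(K * s ^ 2 * (1 + ‖y‖) ^ q) + 1) := by ring
        _ ≤ Real.exp (-V y) * Real.exp (-(K * s ^ 2 * (1 + ‖y‖) ^ q)) := by gcongr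
        _ = Real.exp (-V y + -(K * s ^ 2 * (1 + ‖y‖) ^ q)) := (Real.exp_add _ _).symm
        _ ≤ _ := Real.exp_le_exp.2 (by linarith)

end Cone

lemma isOpen_orthantOpen (d : ℕ) : IsOpen (orthantOpen d) := by
  simp only [orthantOpen, Set.ofPred_forall]
  exact isOpen_iInter_of_finite fun i => isOpen_lt continuous_const (by fun_prop)

lemma orthantOpen_subset_orthantClosed (d : ℕ) : orthantOpen d ⊆ orthantClosed d :=
  fun _ hx i => (hx i).le

lemma orthantClosed_ae_eq_orthantOpen (d : ℕ) :
    orthantClosed d =ᵐ[volume] orthantOpen d := by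
  have hnull : ∀ i : Fin d, volume {x : ESp d | x i = 0} = 0 := fun i => by
    have := Measure.addHaar_submodule (volume : Measure (ESp d))
      (LinearMap.ker (EuclideanSpace.proj i : ESp d →L[ℝ] ℝ).toLinearMap) fun h => by
        have h1 : EuclideanSpace.single i (1 : ℝ) ∈
          LinearMap.ker (EuclideanSpace.proj i : ESp d →L[ℝ] ℝ).toLinearMap := h ▸ trivial
        simp at h1
    convert! this using 2
  have hae : ∀ᵐ x : ESp d, ∀ i, x i ≠ 0 := ae_all_iff.2 fun i => by
    rw [ae_iff]; simpa using hnull i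
  filter_upwards [hae] with x hx
  exact propext ⟨fun h i => lt_of_le_of_ne (h i) (hx i).symm,
    fun h => orthantOpen_subset_orthantClosed d h⟩

/-- Let `X` be a `d`-dimensional random vector whose law has a density in `𝒫(d)` or `𝒫⁺(d)`.
Then there is `C > 0` depending only on the law of `X` and `d` such that for every
`ε ∈ (−1/2, 1/2)`, with `X' = X/(1+ε)`, one has `ρ(L_X, L_{X'}) ≥ 1 − C ε²`. -/
theorem stmt3 {Ω : Type*} [MeasurableSpace Ω] (P : Measure Ω) [IsProbabilityMeasure P]
    (d : ℕ) (X : Ω → ESp d) (hX : Measurable X)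
    (hlaw : HasDensityInP d (P.map X) ∨ HasDensityInPplus d (P.map X)) :
    ∃ C > (0:ℝ), ∀ ε ∈ Set.Ioo (-(1/2) : ℝ) (1/2),
      1 - C * ε ^ 2 ≤ hellingerAffinity (P.map X) (P.map fun ω => (1 + ε)⁻¹ • X ω) := by

  have hmap : ∀ c : ℝ, P.map (fun ω => c • X ω) = (P.map X).map fun x => c • x := fun c =>
    (Measure.map_map (measurable_const_smul c) hX).symm
  simp_rw [hmap]
  rcases hlaw with ⟨V, hV, hμ⟩ | ⟨V, hV, hμ⟩
  · rw [hμ, ← Measure.restrict_univ (μ := (volume : Measure (ESp d)))]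
    refine exists_hellingerAffinity_lower_bound isOpen_univ (fun _ _ _ _ => trivial)
      (contDiff_infty.1 hV.smooth 2).contDiffOn ?_ ?_ ?_
    · simpa using hV.polyGrowth
    · simpa using hV.superPoly
    · simpa using hV.isDensity
  · rw [hμ, Measure.restrict_congr_set (orthantClosed_ae_eq_orthantOpen d)]
    refine exists_hellingerAffinity_lower_bound (isOpen_orthantOpen d)
      (fun c hc x hx i => by simpa using mul_pos hc (hx i))
      (contDiffOn_infty.1 hV.smooth 2) ?_ ?_ ?_
    · intro k
      obtain ⟨g, -, hg, C, p, hC⟩ := hV.derivsExtendPolyGrowth k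
      refine ⟨C, p, fun x hx => ?_⟩
      rw [← iteratedFDerivWithin_of_isOpen k (isOpen_orthantOpen d) hx, ← hg x hx]
      exact hC x (orthantOpen_subset_orthantClosed d hx)
    · exact fun q => (hV.superPoly q).mono_left
        (inf_le_inf_left _ (principal_mono.2 (orthantOpen_subset_orthantClosed d)))
    · rw [← setIntegral_congr_set (orthantClosed_ae_eq_orthantOpen d), hV.isDensity]
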